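/- arXiv:math/0702246 — 7 statements merged into one kernel-verified Lean document; each statement's English description precedes it below -/
import Mathlib

section
/- Let n be a prime number and let ω = e^{2πi/n}. Let Ω be the n×n matrix with entries a_{i,j} = ω^{ij} for 1 ≤ i, j ≤ n. Then every minor of Ω is non-zero; that is, for any subset I of row indices and subset J of column indices with |I| = |J|, the determinant of the submatrix of Ω with rows I and columns J is non-zero. -/
open Complex Matrix

/-!
The proof reduces the matrix modulo a place of `ℂ` above `n`.

Let `V` be a valuation ring of `ℂ` in which the prime `n` is not a unit. It contains `ω`, and since
`(ω - 1) ^ n ≡ ω ^ n - 1 = 0` in the residue field `k`, which has characteristic `n`, `ω` reduces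
to `1`. If a minor with rows `a i` and columns `b j` vanishes, it has a nonzero kernel vector `w`
over `V`; dividing by a coordinate that divides all the others, some coordinate of `w` may be
assumed to be `1`. The polynomial `∑ j, w j * X ^ b j` vanishes at the `m` distinct points
`ω ^ a i`, so it is divisible by `∏ i, (X - ω ^ a i)`, and its reduction
`g = ∑ j, w̄ j * X ^ b j` by `(X - 1) ^ m`. The operator `X * d/dX` multiplies the coefficient of
`X ^ b` by `b` and lowers the order of vanishing at `1` by at most one, so applying it `r < m` times
and evaluating at `1` gives `∑ j, w̄ j * b j ^ r = 0`. The `b j` are distinct in `k`, so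
the Vandermonde determinant forces `w̄ = 0`, contradicting `w̄ j = 1` for some `j`
(`eq_zero_of_X_sub_one_pow_dvd`, `det_pow_ne_zero_of_valuationRing`).
-/

open Polynomial in
/-- After `r` applications of `X * d/dX`, a sum of monomials that vanishes at `1` to order `m`
still vanishes there to order `m - r`. -/
lemma X_sub_one_pow_dvd_euler {k : Type*} [CommRing k] {m : ℕ} (v : Fin m → k) (b : Fin m → ℕ)
    (r : ℕ) : ∀ s : ℕ, (X - 1 : k[X]) ^ (s + r) ∣ ∑ j, C (v j) * X ^ b j →
      (X - 1 : k[X]) ^ s ∣ ∑ j, C (v j * (b j : k) ^ r) * X ^ b j := by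
  induction r with
  | zero => intro s h; simpa using h
  | succ r ih =>
    intro s h
    obtain ⟨q, hq⟩ := ih (s + 1) (by rwa [add_assoc, add_comm 1 r])
    have key : ∑ j, C (v j * (b j : k) ^ (r + 1)) * X ^ b j
        = X * derivative (∑ j, C (v j * (b j : k) ^ r) * X ^ b j) := by
      rw [derivative_sum, Finset.mul_sum]
      refine Finset.sum_congr rfl fun j _ => ?_
      rw [derivative_C_mul_X_pow]
      rcases Nat.eq_zero_or_pos (b j) with h0 | h0
      · simp [h0]
      · rw [mul_left_comm, ← pow_succ', Nat.sub_add_cancel h0, pow_succ, mul_assoc]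
    rw [key, hq, derivative_mul, derivative_pow]
    refine Dvd.dvd.mul_left (dvd_add ?_ ?_) _
    · exact Dvd.dvd.mul_right (Dvd.dvd.mul_right (Dvd.dvd.mul_left (by simp) _) _) _
    · exact Dvd.dvd.mul_right (pow_dvd_pow _ (Nat.le_succ s)) _

open Polynomial in
/-- A nonzero polynomial with at most `m` terms, whose exponents are distinct in the coefficient
domain, vanishes at `1` to order less than `m`. -/
lemma eq_zero_of_X_sub_one_pow_dvd {k : Type*} [CommRing k] [IsDomain k] {m : ℕ} (v : Fin m → k)
    (b : Fin m → ℕ) (hb : Function.Injective fun j => (b j : k))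
    (h : (X - 1 : k[X]) ^ m ∣ ∑ j, C (v j) * X ^ b j) : v = 0 := by
  refine Matrix.eq_zero_of_forall_pow_sum_mul_pow_eq_zero hb fun r => ?_
  have h1 := X_sub_one_pow_dvd_euler v b r (m - r) (by rwa [Nat.sub_add_cancel r.2.le])
  obtain ⟨q, hq⟩ := (dvd_pow_self (X - 1 : k[X]) (Nat.sub_pos_of_lt r.2).ne').trans h1
  simpa [eval_finsetSum] using congrArg (eval 1) hq

lemma exists_dvd_all {V ι : Type*} [CommRing V] [IsDomain V] [ValuationRing V] [Fintype ι]
    [Nonempty ι] (v : ι → V) : ∃ i, ∀ j, v i ∣ v j := by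
  classical
  suffices ∀ s : Finset ι, s.Nonempty → ∃ i, ∀ j ∈ s, v i ∣ v j by
    simpa using this Finset.univ Finset.univ_nonempty
  intro s hs
  induction hs using Finset.Nonempty.cons_induction with
  | singleton a => exact ⟨a, by simp⟩
  | cons a s ha hs ih =>
    obtain ⟨i, hi⟩ := ih
    rcases ValuationRing.dvd_total (v i) (v a) with h | h
    · exact ⟨i, by simpa using ⟨h, hi⟩⟩
    · exact ⟨a, by simpa using fun j hj => h.trans (hi j hj)⟩

open Polynomial in
/-- Nonvanishing of generalized Vandermonde minors of points `x i` that are distinct in the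
valuation ring `V` but all reduce to `1` in the residue field. -/
lemma det_pow_ne_zero_of_valuationRing {V : Type*} [CommRing V] [IsDomain V] [ValuationRing V]
    {m : ℕ} (x : Fin m → V) (hx : Function.Injective x)
    (hx1 : ∀ i, IsLocalRing.residue V (x i) = 1) (b : Fin m → ℕ)
    (hb : Function.Injective fun j => (b j : IsLocalRing.ResidueField V)) :
    (Matrix.of fun i j => x i ^ b j).det ≠ 0 := by
  intro hdet
  obtain ⟨v, hv0, hv⟩ := Matrix.exists_mulVec_eq_zero_iff.mpr hdet
  obtain ⟨j₁, hj₁⟩ := Function.ne_iff.mp hv0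
  have : Nonempty (Fin m) := ⟨j₁⟩
  obtain ⟨j₀, hj₀⟩ := exists_dvd_all v
  have hvj₀ : v j₀ ≠ 0 := fun h0 => hj₁ (zero_dvd_iff.mp (h0 ▸ hj₀ j₁))
  choose w hw using hj₀
  have hw1 : w j₀ = 1 := mul_left_cancel₀ hvj₀ (by rw [← hw, mul_one])
  have hroot : ∀ i, ∑ j, w j * x i ^ b j = 0 := by
    intro i
    refine mul_left_cancel₀ hvj₀ ?_
    have := congrFun hv i
    simp only [Matrix.mulVec, dotProduct, Matrix.of_apply, Pi.zero_apply] at this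
    rw [mul_zero, Finset.mul_sum, ← this]
    refine Finset.sum_congr rfl fun j _ => ?_
    rw [hw j]; ring
  have hdvd : ∏ i, (X - C (x i)) ∣ ∑ j, C (w j) * X ^ b j := by
    by_cases hg : ∑ j, C (w j) * X ^ b j = 0
    · rw [hg]; exact dvd_zero _
    have := (Multiset.prod_X_sub_C_dvd_iff_le_roots hg (Finset.univ.val.map x)).mpr
      ((Multiset.le_iff_subset (Finset.univ.nodup.map hx)).mpr ?_)
    · rwa [Multiset.map_map] at this
    · intro y hy
      obtain ⟨i, -, rfl⟩ := Multiset.mem_map.mp hy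
      rw [mem_roots hg, IsRoot.def]
      simpa [eval_finsetSum] using hroot i
  have hred := Polynomial.map_dvd (IsLocalRing.residue V) hdvd
  have hzero := eq_zero_of_X_sub_one_pow_dvd (fun j => IsLocalRing.residue V (w j)) b hb
    (by simpa [Polynomial.map_prod, Polynomial.map_sum, hx1] using hred)
  simpa [hw1] using congrFun hzero j₀

/-- There is a place of `ℂ` above every prime. -/
lemma exists_valuationSubring_prime_nonunit (p : ℕ) (hp : p.Prime) :
    ∃ B : ValuationSubring ℂ, (p : ℂ) ∈ B.nonunits := by
  let A : Subring ℂ := (Int.castRingHom ℂ).range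
  have hI : Ideal.span {(p : A)} ≠ ⊤ := by
    rw [Ne, Ideal.span_singleton_eq_top]
    intro hu
    obtain ⟨⟨_, q, rfl⟩, hq⟩ := isUnit_iff_exists_inv.mp hu
    have h1 : ((p : ℤ) * q : ℤ) = 1 := by
      have := congrArg Subtype.val hq
      push_cast at this
      simp only [eq_intCast] at this
      exact_mod_cast this
    exact hp.one_lt.ne' (by exact_mod_cast Int.eq_one_of_mul_eq_one_right (by positivity) h1)
  obtain ⟨B, -, hB⟩ := Ideal.image_subset_nonunits_valuationSubring _ hI
  exact ⟨B, hB ⟨(p : A), Ideal.mem_span_singleton_self _, by simp⟩⟩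

/-- **Chebotarev's theorem.** Let `n` be prime, `ω = e^{2πi/n}`, and `Ω` the `n × n`
matrix with entries `a_{i,j} = ω^{ij}` for `1 ≤ i, j ≤ n`. Then every minor of `Ω`
is non-zero: for any choice of equally many rows and columns (given by injective
maps `e f : Fin m → Fin n`), the determinant of the corresponding submatrix is non-zero. -/
theorem chebotarev_minors (n : ℕ) (hn : n.Prime)
    (ω : ℂ) (hω : ω = Complex.exp (2 * Real.pi * Complex.I / n))
    (Ω : Matrix (Fin n) (Fin n) ℂ)
    (hΩ : ∀ i j : Fin n, Ω i j = ω ^ (((i : ℕ) + 1) * ((j : ℕ) + 1)))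
    (m : ℕ) (e f : Fin m → Fin n)
    (he : Function.Injective e) (hf : Function.Injective f) :
    (Ω.submatrix e f).det ≠ 0 := by
  have hprim : IsPrimitiveRoot ω n := hω ▸ Complex.isPrimitiveRoot_exp n hn.ne_zero
  obtain ⟨B, hB⟩ := exists_valuationSubring_prime_nonunit n hn
  have hωB : ω ∈ B := by
    have hint : IsIntegral B ω := (hprim.isIntegral hn.pos).tower_top
    obtain ⟨y, hy⟩ := IsIntegrallyClosed.isIntegral_iff.mp hint
    rw [← hy]
    exact y.2
  let z : B := ⟨ω, hωB⟩
  have hzn : z ^ n = 1 := Subtype.ext hprim.pow_eq_one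
  let k := IsLocalRing.ResidueField B
  have hnk : (n : k) = 0 := by
    rw [← map_natCast (IsLocalRing.residue B), IsLocalRing.residue_eq_zero_iff]
    exact ValuationSubring.coe_mem_nonunits_iff.mp (by simpa using hB)
  have : Fact n.Prime := ⟨hn⟩
  have : CharP k n := (CharP.charP_iff_prime_eq_zero hn).mpr hnk
  have hz1 : IsLocalRing.residue B z = 1 := by
    have : (IsLocalRing.residue B z - 1) ^ n = 0 := by
      rw [sub_pow_char, ← map_pow, hzn, map_one, one_pow, sub_self]
    exact sub_eq_zero.mp (pow_eq_zero_iff hn.ne_zero |>.mp this)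
  have hmain := det_pow_ne_zero_of_valuationRing (V := B) (fun i => z ^ ((e i : ℕ) + 1))
    (fun i j hij => by
      have h1 : ω ^ ((e i : ℕ) + 1) = ω ^ ((e j : ℕ) + 1) := congrArg Subtype.val hij
      rw [pow_succ, pow_succ] at h1
      have h2 := mul_right_cancel₀ (hprim.ne_zero hn.ne_zero) h1
      exact he (Fin.ext (hprim.pow_inj (e i).2 (e j).2 h2)))
    (fun i => by rw [map_pow, hz1, one_pow])
    (fun j => (f j : ℕ) + 1)
    (fun i j hij => by
      have h1 : ((f i : ℕ) : k) = ((f j : ℕ) : k) := by simpa using hij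
      have h2 := (CharP.natCast_eq_natCast k n).mp h1
      exact hf (Fin.ext (Nat.ModEq.eq_of_lt_of_lt h2 (f i).2 (f j).2)))
  have hmap : Ω.submatrix e f
      = B.subtype.mapMatrix (Matrix.of fun i j => (z ^ ((e i : ℕ) + 1)) ^ ((f j : ℕ) + 1)) := by
    ext i j
    simp [hΩ, z, pow_mul]
  rw [hmap, ← RingHom.map_det]
  exact fun h => hmain (Subtype.ext h)
end

section
/- Let n be a prime number and let P(z) be a non-zero complex polynomial with deg P ≤ n−1. If P has exactly k distinct roots among the n-th roots of unity, then w(P) > k. -/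
open Polynomial

/-!
The proof reduces modulo `p` at the level of a valuation ring. There is a valuation subring `V` of
`ℂ` whose residue field `F` has characteristic `p = n`. Dividing `P` by a coefficient of maximal
valuation, all coefficients of `P` lie in `V` and one of them is `1`, so its reduction `Q` over `F`
is non-zero, has degree less than `p`, and has at most as many terms as `P`.
The `p`-th roots of unity lie in `V`, and since `x ^ p = 1` forces `x = 1` in characteristic `p`,
each of them reduces to `1`. Hence `(X - 1) ^ k ∣ Q`, where `k` counts the zeros of `P` among them.

Finally, over a field of characteristic `p`, a non-zero polynomial of degree less than `p` divisible
by `(X - 1) ^ k` has more than `k` terms (`lt_card_support_of_X_sub_one_pow_dvd`): applying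
`X * d/dX - r`, with `r` an exponent that occurs, removes exactly one term and lowers the order of
vanishing at `1` by at most one.
-/

/-- In characteristic `p`, a polynomial of degree less than `p` vanishes at `1` to an order smaller
than its number of terms. The degree bound makes the exponents distinct modulo `p`, so that
`X * d/dX - r` annihilates no term other than the one of exponent `r`. -/
theorem lt_card_support_of_X_sub_one_pow_dvd {F : Type*} [Field F] (p : ℕ) [CharP F p] (m : ℕ) :
    ∀ Q : F[X], Q ≠ 0 → Q.natDegree < p → (X - 1) ^ m ∣ Q → m < Q.support.card := by
  classical
  induction m with
  | zero =>
    intro Q hQ _ _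
    exact Finset.card_pos.mpr (support_nonempty.mpr hQ)
  | succ m ih =>
    intro Q hQ hdeg hdvd
    obtain ⟨r, hr⟩ := support_nonempty.mpr hQ
    have hlt : ∀ i ∈ Q.support, i < p := fun i hi => (le_natDegree_of_mem_supp i hi).trans_lt hdeg
    set R : F[X] := X * derivative Q - C (r : F) * Q with hR
    have hcoeff : ∀ i, R.coeff i = ((i : F) - r) * Q.coeff i := by
      intro i
      rcases i with _ | i
      · simp [hR]
      · simp only [hR, coeff_sub, coeff_X_mul, coeff_derivative, coeff_C_mul]
        push_cast
        ring
    have hsupp : R.support = Q.support.erase r := by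
      ext i
      rw [Finset.mem_erase, mem_support_iff, hcoeff, mul_ne_zero_iff, ← mem_support_iff]
      refine and_congr_left fun hi => ?_
      rw [sub_ne_zero, not_iff_not]
      refine ⟨fun h => ?_, fun h => by rw [h]⟩
      rw [CharP.natCast_eq_natCast F p] at h
      exact Nat.ModEq.eq_of_lt_of_lt h (hlt i hi) (hlt r hr)
    have hcard : R.support.card + 1 = Q.support.card := by
      rw [hsupp, Finset.card_erase_add_one hr]
    have hdvdR : (X - 1) ^ m ∣ R := by
      have h1 : (X - 1) ^ m ∣ derivative Q := by
        simpa using pow_sub_one_dvd_derivative_of_pow_dvd hdvd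
      exact dvd_sub (h1.mul_left _) (((pow_dvd_pow _ m.le_succ).trans hdvd).mul_left _)
    have hR0 : R ≠ 0 := by
      intro h0
      -- Otherwise `Q` is a monomial, which does not vanish at `1`.
      rw [h0, support_zero, Finset.card_empty, zero_add, eq_comm, card_support_eq_one] at hcard
      obtain ⟨j, a, ha, rfl⟩ := hcard
      have hz : eval 1 (C a * X ^ j) = 0 := by
        have := eval_dvd (x := (1 : F)) ((dvd_pow_self _ m.succ_ne_zero).trans hdvd)
        simpa using this
      exact ha (by simpa using hz)
    have hdegR : R.natDegree < p := by
      have := hsupp ▸ natDegree_mem_support_of_nonzero hR0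
      exact hlt _ (Finset.mem_of_mem_erase this)
    have := ih R hR0 hdegR hdvdR
    omega

/-- The valuation subring is one dominating `ℤ` at the prime ideal `(p)`. -/
theorem exists_valuationSubring_charP_residueField (p : ℕ) (hp : p.Prime) :
    ∃ V : ValuationSubring ℂ, CharP (IsLocalRing.ResidueField V) p := by
  let A : Subring ℂ := ⊥
  let I : Ideal A := Ideal.span {(p : A)}
  have hI : I ≠ ⊤ := by
    rw [Ne, Ideal.span_singleton_eq_top]
    intro h
    obtain ⟨b, hb⟩ := h.exists_right_inv
    obtain ⟨c, hc⟩ := Subring.mem_bot.mp b.2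
    have h1 : (p : ℂ) * (c : ℂ) = 1 := by
      rw [hc]
      exact_mod_cast congrArg (Subtype.val) hb
    have h2 : (p : ℤ) * c = 1 := by exact_mod_cast h1
    exact (Nat.prime_iff_prime_int.mp hp).not_isUnit (IsUnit.of_mul_eq_one _ h2)
  obtain ⟨V, -, hV⟩ := Ideal.image_subset_nonunits_valuationSubring I hI
  have hpV : (p : ℂ) ∈ V.nonunits := hV ⟨(p : A), Ideal.mem_span_singleton_self _, by simp⟩
  refine ⟨V, ?_⟩
  have h0 : ((p : ℕ) : IsLocalRing.ResidueField V) = 0 := by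
    rw [← map_natCast (IsLocalRing.residue V), IsLocalRing.residue_eq_zero_iff]
    exact ValuationSubring.coe_mem_nonunits_iff.mp (by simpa using hpV)
  exact (CharP.charP_iff_prime_eq_zero hp).mpr h0

/-- If `n` is prime and `P` is a non-zero complex polynomial of degree at most `n - 1`
having exactly `k` distinct roots among the `n`-th roots of unity, then the number of
non-zero coefficients of `P` is greater than `k`. -/
theorem chebotarev_polynomial (n : ℕ) (hn : n.Prime)
    (P : Polynomial ℂ) (hP : P ≠ 0) (hdeg : P.natDegree ≤ n - 1)
    (k : ℕ)
    (hk : k = (((Polynomial.nthRoots n (1 : ℂ)).toFinset).filter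
      (fun z => P.eval z = 0)).card) :
    P.support.card > k := by
  classical
  obtain ⟨V, hV⟩ := exists_valuationSubring_charP_residueField n hn
  have : Fact n.Prime := ⟨hn⟩
  obtain ⟨i, hi, hmax⟩ := Finset.exists_max_image P.support (fun j => V.valuation (P.coeff j))
    (support_nonempty.mpr hP)
  have hi0 : P.coeff i ≠ 0 := mem_support_iff.mp hi
  have hlift : C (P.coeff i)⁻¹ * P ∈ lifts (algebraMap V ℂ) := by
    rw [lifts_iff_coeff_lifts]
    intro j
    have hj : (P.coeff i)⁻¹ * P.coeff j ∈ V := by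
      rw [← V.valuation_le_one_iff, map_mul, map_inv₀]
      by_cases hj0 : j ∈ P.support
      · have hv : 0 < V.valuation (P.coeff i) := by
          rw [Valuation.pos_iff]
          exact hi0
        rw [inv_mul_le_iff₀ hv, mul_one]
        exact hmax j hj0
      · simp [notMem_support_iff.mp hj0]
    exact ⟨⟨_, hj⟩, by simp⟩
  obtain ⟨PV, hPV⟩ := (mem_lifts _).mp hlift
  have hinj : Function.Injective (algebraMap V ℂ) := Subtype.val_injective
  have hcoeff : ∀ j, algebraMap V ℂ (PV.coeff j) = (P.coeff i)⁻¹ * P.coeff j := by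
    intro j
    rw [← coeff_map, hPV, coeff_C_mul]
  set Q := PV.map (IsLocalRing.residue V) with hQ
  have hQi : Q.coeff i = 1 := by
    have : PV.coeff i = 1 := hinj (by rw [hcoeff, inv_mul_cancel₀ hi0, map_one])
    rw [hQ, coeff_map, this, map_one]
  have hQ0 : Q ≠ 0 := by
    rintro h
    simp [h] at hQi
  have hQsupp : Q.support ⊆ P.support := by
    intro j hj
    rw [mem_support_iff] at hj ⊢
    intro h0
    have : PV.coeff j = 0 := hinj (by rw [hcoeff, h0, mul_zero, map_zero])
    exact hj (by rw [hQ, coeff_map, this, map_zero])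
  have hQdeg : Q.natDegree < n := by
    have h1 := le_natDegree_of_mem_supp _ (hQsupp (natDegree_mem_support_of_nonzero hQ0))
    have := hn.pos
    omega
  set S := ((nthRoots n (1 : ℂ)).toFinset).filter (fun z => P.eval z = 0) with hS
  have hSpow : ∀ z ∈ S, z ^ n = 1 := by
    intro z hz
    rw [hS, Finset.mem_filter, Multiset.mem_toFinset, mem_nthRoots hn.pos] at hz
    exact hz.1
  have hSV : ∀ z ∈ S, z ∈ V := by
    intro z hz
    have h1 : V.valuation z ^ n = 1 := by rw [← map_pow, hSpow z hz, map_one]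
    rw [← V.valuation_le_one_iff]
    exact (pow_le_one_iff hn.ne_zero).mp h1.le
  let T : Finset V := S.subtype (· ∈ V)
  have hTcard : T.card = S.card := by
    rw [Finset.card_subtype, Finset.filter_true_of_mem hSV]
  have hPV0 : PV ≠ 0 := by
    rintro h
    simp [hQ, h] at hQ0
  have hdvd : ∏ z ∈ T, (X - C z) ∣ PV := by
    refine (Multiset.prod_X_sub_C_dvd_iff_le_roots hPV0 T.val).mpr ?_
    rw [Multiset.le_iff_subset T.nodup]
    intro z hz
    have hzS : (z : ℂ) ∈ S := Finset.mem_subtype.mp hz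
    rw [mem_roots hPV0, IsRoot.def]
    apply hinj
    have hz0 : P.eval (z : ℂ) = 0 := (Finset.mem_filter.mp hzS).2
    have h2 : eval (algebraMap V ℂ z) (PV.map (algebraMap V ℂ)) = 0 := by
      rw [hPV, eval_mul]
      exact mul_eq_zero_of_right _ hz0
    rwa [eval_map_apply, ← map_zero (algebraMap V ℂ)] at h2
  have hres : ∀ z ∈ T, IsLocalRing.residue V z = 1 := by
    intro z hz
    have hzn : z ^ n = 1 := hinj (by
      rw [map_pow, map_one]
      exact hSpow _ (Finset.mem_subtype.mp hz))
    -- The Frobenius map of the residue field is injective.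
    apply frobenius_inj (IsLocalRing.ResidueField V) n
    rw [frobenius_def, ← map_pow, hzn, map_one, map_one]
  have hdvdQ : (X - 1) ^ k ∣ Q := by
    have h1 := Polynomial.map_dvd (IsLocalRing.residue V) hdvd
    rw [Polynomial.map_prod, Finset.prod_congr rfl (g := fun _ => X - 1)
      (fun z hz => by simp [hres z hz]), Finset.prod_const, hTcard, ← hk] at h1
    exact h1
  exact (lt_card_support_of_X_sub_one_pow_dvd n k Q hQ0 hQdeg hdvdQ).trans_le
    (Finset.card_le_card hQsupp)
end

section
/- Let n ≥ 1 be a natural number and let P(z) be a non-zero complex polynomial with deg P ≤ n−1. If P has exactly k distinct roots among the n-th roots of unity, then w(P) · (n − k) ≥ n (equivalently, w(P) ≥ n/(n−k)). -/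
/-!
This is the uncertainty principle on the cyclic group of `n`-th roots of unity. By orthogonality,
`n * a_j = ∑ P(z) z⁻ʲ`, the sum running over the `n - k` roots of unity at which `P` does not
vanish (`coeff_inversion`). Each `|P(z)|` is at most `∑ |a_i| ≤ w(P) |a_j|` when `a_j` is a
coefficient of largest modulus, so `n |a_j| ≤ (n - k) w(P) |a_j|`, and `a_j ≠ 0`.
-/

open Polynomial

lemma mem_nthRoots_one_toFinset {n : ℕ} (hn : 1 ≤ n) {z : ℂ} :
    z ∈ (nthRoots n (1 : ℂ)).toFinset ↔ z ^ n = 1 := by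
  rw [Multiset.mem_toFinset, mem_nthRoots hn]

/-- Orthogonality of the characters `z ↦ z ^ i`: multiplying the summation variable by a primitive
root `ζ` scales the sum by `ζ ^ i * ζ⁻¹ ^ j ≠ 1`. -/
lemma sum_nthRoots_pow_eq_zero {n : ℕ} (hn : 1 ≤ n) {i j : ℕ} (hi : i < n) (hj : j < n)
    (hij : i ≠ j) :
    ∑ z ∈ (nthRoots n (1 : ℂ)).toFinset, z ^ i * z⁻¹ ^ j = 0 := by
  have hζ := Complex.isPrimitiveRoot_exp n (by omega)
  set ζ := Complex.exp (2 * Real.pi * Complex.I / n)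
  have hζ0 : ζ ≠ 0 := hζ.ne_zero (by omega)
  have key : ∑ z ∈ (nthRoots n (1 : ℂ)).toFinset, z ^ i * z⁻¹ ^ j
      = (ζ ^ i * ζ⁻¹ ^ j) * ∑ z ∈ (nthRoots n (1 : ℂ)).toFinset, z ^ i * z⁻¹ ^ j := by
    rw [Finset.mul_sum]
    refine Finset.sum_bij' (fun z _ => ζ⁻¹ * z) (fun z _ => ζ * z) ?_ ?_ ?_ ?_ ?_
    · intro z hz
      rw [mem_nthRoots_one_toFinset hn] at hz ⊢
      rw [mul_pow, hz, inv_pow, hζ.pow_eq_one]; simp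
    · intro z hz
      rw [mem_nthRoots_one_toFinset hn] at hz ⊢
      rw [mul_pow, hz, hζ.pow_eq_one]; simp
    · intro z _; simp [hζ0]
    · intro z _; simp [hζ0]
    · intro z _
      rw [mul_mul_mul_comm, ← mul_pow, ← mul_pow, mul_inv, inv_inv, mul_inv_cancel_left₀ hζ0,
        inv_mul_cancel_left₀ hζ0]
  have hne : ζ ^ i * ζ⁻¹ ^ j ≠ 1 := by
    intro h
    apply hij
    apply hζ.pow_inj hi hj
    rwa [inv_pow, mul_inv_eq_one₀ (pow_ne_zero _ hζ0)] at h
  by_contra h0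
  exact hne (mul_right_cancel₀ h0 (by rw [one_mul]; exact key.symm))

lemma card_nthRoots_one_toFinset {n : ℕ} (hn : 1 ≤ n) :
    (nthRoots n (1 : ℂ)).toFinset.card = n := by
  have h := (Complex.isPrimitiveRoot_exp n (by omega))
  rw [Multiset.toFinset_card_of_nodup h.nthRoots_one_nodup, h.card_nthRoots_one]

/-- Fourier inversion: the values at the `n`-th roots of unity recover the coefficients. -/
lemma coeff_inversion {n : ℕ} (hn : 1 ≤ n) {P : ℂ[X]} (hdeg : P.natDegree ≤ n - 1) {j : ℕ}
    (hj : j ∈ P.support) :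
    ∑ z ∈ (nthRoots n (1 : ℂ)).toFinset, P.eval z * z⁻¹ ^ j = n * P.coeff j := by
  have hlt : ∀ i ∈ P.support, i < n := fun i hi => by
    have := le_natDegree_of_mem_supp i hi
    omega
  simp_rw [eval_eq_sum, sum_def, Finset.sum_mul]
  rw [Finset.sum_comm, Finset.sum_eq_single_of_mem j hj]
  · have : ∀ z ∈ (nthRoots n (1 : ℂ)).toFinset, P.coeff j * z ^ j * z⁻¹ ^ j = P.coeff j := by
      intro z hz
      rw [mem_nthRoots_one_toFinset hn] at hz
      have hz0 : z ≠ 0 := by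
        rintro rfl
        simp [show n ≠ 0 by omega] at hz
      rw [mul_assoc, ← mul_pow, mul_inv_cancel₀ hz0, one_pow, mul_one]
    rw [Finset.sum_congr rfl this, Finset.sum_const, card_nthRoots_one_toFinset hn, nsmul_eq_mul]
  · intro i hi hij
    simp_rw [mul_assoc]
    rw [← Finset.mul_sum, sum_nthRoots_pow_eq_zero hn (hlt i hi) (hlt j hj) hij, mul_zero]

/-- Let `n ≥ 1` and let `P` be a non-zero complex polynomial of degree at most `n - 1`
having exactly `k` distinct roots among the `n`-th roots of unity. Then
`w(P) * (n - k) ≥ n`, where `w(P)` is the number of non-zero coefficients of `P`. -/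
theorem weight_mul_ge (n : ℕ) (hn : 1 ≤ n)
    (P : Polynomial ℂ) (hP : P ≠ 0) (hdeg : P.natDegree ≤ n - 1)
    (k : ℕ)
    (hk : k = (((Polynomial.nthRoots n (1 : ℂ)).toFinset).filter
      (fun z => P.eval z = 0)).card) :
    P.support.card * (n - k) ≥ n := by
  obtain ⟨j, hj, hmax⟩ := P.support.exists_max_image (fun i => ‖P.coeff i‖)
    (nonempty_support_iff.mpr hP)
  have hpos : 0 < ‖P.coeff j‖ := norm_pos_iff.mpr (mem_support_iff.mp hj)
  set S := (nthRoots n (1 : ℂ)).toFinset.filter (fun z => ¬ P.eval z = 0) with hS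
  have hcard : S.card = n - k := by
    have h := Finset.card_filter_add_card_filter_not (s := (nthRoots n (1 : ℂ)).toFinset)
      (fun z => P.eval z = 0)
    rw [card_nthRoots_one_toFinset hn, ← hk, ← hS] at h
    omega
  have hinv : ∑ z ∈ S, P.eval z * z⁻¹ ^ j = n * P.coeff j := by
    rw [← coeff_inversion hn hdeg hj]
    refine Finset.sum_filter_of_ne fun z _ hz h0 => hz ?_
    rw [h0, zero_mul]
  have hbound : ∀ z ∈ S, ‖P.eval z * z⁻¹ ^ j‖ ≤ P.support.card * ‖P.coeff j‖ := by
    intro z hz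
    have hz1 : ‖z‖ = 1 := Complex.norm_eq_one_of_pow_eq_one
      ((mem_nthRoots_one_toFinset hn).mp (Finset.mem_filter.mp hz).1) (by omega)
    rw [norm_mul, norm_pow, norm_inv, hz1, inv_one, one_pow, mul_one, eval_eq_sum, sum_def,
      ← nsmul_eq_mul]
    refine (norm_sum_le _ _).trans (Finset.sum_le_card_nsmul _ _ _ fun i hi => ?_)
    rw [norm_mul, norm_pow, hz1, one_pow, mul_one]
    exact hmax i hi
  have hle := (norm_sum_le _ _).trans (Finset.sum_le_card_nsmul _ _ _ hbound)
  rw [hinv, norm_mul, Complex.norm_natCast, nsmul_eq_mul, hcard, ← mul_assoc] at hle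
  have h := le_of_mul_le_mul_right hle hpos
  rw [mul_comm]
  exact_mod_cast h
end

section
/- Let n ≥ 1 be a natural number, ω = e^{2πi/n}, and let P(z) be a non-zero complex polynomial with deg P ≤ n−1 having exactly k distinct roots among the n-th roots of unity. If w(P) · (n − k) = n, then there exist a non-zero complex number c, a divisor r of n, an integer l with 0 ≤ l ≤ r−1, and an integer j with 0 ≤ j ≤ n−1, such that P(z) = c · D_{n,r,l}(ω^j z). -/
/-!
This is the equality case of the Donoho–Stark uncertainty principle on `ℤ/n`.

Let `S` be the support of `P`, `s = |S|`, `a_m` its coefficients, `A = ∑ |a_m|²`, and let `T` be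
the set of `n`-th roots of unity at which `P` does not vanish, so the hypothesis reads
`|S| |T| = n`. For a root of unity `z` the "variance" identity
`∑_{m ∈ S} |s a_m z^m - P(z)|² = s² A - s |P(z)|²` holds (`variance_identity`). Summing over
`z ∈ T` and using Parseval, `∑_z |P(z)|² = n A` (`parseval`), the right-hand side becomes
`s A (s |T| - n) = 0`. Hence for each `z ∈ T` the terms `a_m z^m`, `m ∈ S`, are all equal.

Fix `z₀ ∈ T` and `m₀ ∈ S`. For `z ∈ T` the quotient `u = z / z₀` satisfies `u^m = u^{m₀}` for
all `m ∈ S`. Let `r` be the least common multiple of the orders of these `u`. Then `r ∣ n`, every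
`u` is an `r`-th root of unity, so `|T| ≤ r`, and `S` lies in a residue class modulo `r`, so
`|S| ≤ n / r`. As `|S| |T| = n`, `S` is the full residue class, and `a_m = c z₀^{-m}` on `S`.
-/

open Polynomial

/-- The polynomial `D_{n,r,l}(z) = z^l (1 + z^r + z^{2r} + ⋯ + z^{(n/r - 1) r})`. -/
noncomputable def Dpoly (n r l : ℕ) : Polynomial ℂ :=
  Polynomial.X ^ l * ∑ i ∈ Finset.range (n / r), Polynomial.X ^ (i * r)

open ComplexConjugate

lemma nthRoots_toFinset_eq_image {n : ℕ} (hn : 1 ≤ n) {ω : ℂ} (hω : IsPrimitiveRoot ω n) :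
    (nthRoots n (1 : ℂ)).toFinset = (Finset.range n).image (fun t => ω ^ t) := by
  ext z
  simp only [Multiset.mem_toFinset, mem_nthRoots hn, Finset.mem_image, Finset.mem_range]
  constructor
  · intro hz
    have : NeZero n := ⟨by omega⟩
    exact hω.eq_pow_of_pow_eq_one hz
  · rintro ⟨t, -, rfl⟩
    rw [← pow_mul, mul_comm, pow_mul, hω.pow_eq_one, one_pow]

lemma mul_conj_of_pow_eq_one {n : ℕ} (hn : 1 ≤ n) {z : ℂ} (hz : z ^ n = 1) :
    z * conj z = 1 := by
  rw [Complex.mul_conj', Complex.norm_eq_one_of_pow_eq_one hz (by omega)]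
  simp

/-- Orthogonality of the characters `z ↦ z ^ m` of the group of `n`-th roots of unity. -/
lemma sum_nthRoots_pow_mul_conj {n : ℕ} (hn : 1 ≤ n) {ω : ℂ} (hω : IsPrimitiveRoot ω n)
    {m m' : ℕ} (hm : m < n) (hm' : m' < n) :
    ∑ z ∈ (nthRoots n (1 : ℂ)).toFinset, z ^ m * conj (z ^ m') = if m = m' then (n : ℂ) else 0 := by
  have h1 := mul_conj_of_pow_eq_one hn hω.pow_eq_one
  rw [nthRoots_toFinset_eq_image hn hω, Finset.sum_image]
  · have h2 : ∀ t ∈ Finset.range n, (ω ^ t) ^ m * conj ((ω ^ t) ^ m')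
        = (ω ^ m * conj ω ^ m') ^ t := by
      intro t _
      simp only [map_pow, mul_pow, ← pow_mul]
      rw [mul_comm t m, mul_comm t m']
    rw [Finset.sum_congr rfl h2]
    split_ifs with h
    · subst h
      simp [← mul_pow, h1]
    · have hx : ω ^ m * conj ω ^ m' ≠ 1 := by
        intro hx
        apply h
        apply hω.pow_inj hm hm'
        calc ω ^ m = ω ^ m * (ω * conj ω) ^ m' := by rw [h1]; simp
          _ = (ω ^ m * conj ω ^ m') * ω ^ m' := by rw [mul_pow]; ring
          _ = ω ^ m' := by rw [hx, one_mul]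
      have hxn : (ω ^ m * conj ω ^ m') ^ n = 1 := by
        rw [mul_pow, ← pow_mul, ← pow_mul, mul_comm m, mul_comm m', pow_mul, pow_mul, ← map_pow,
          hω.pow_eq_one]
        simp
      rw [geom_sum_eq hx, hxn]
      simp
  · intro a ha b hb hab
    exact hω.pow_inj (by simpa using ha) (by simpa using hb) hab

/-- Parseval's identity for the values of `P` at the `n`-th roots of unity. -/
lemma parseval {n : ℕ} (hn : 1 ≤ n) {ω : ℂ} (hω : IsPrimitiveRoot ω n) (P : ℂ[X])
    (hS : ∀ m ∈ P.support, m < n) :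
    ∑ z ∈ (nthRoots n (1 : ℂ)).toFinset, P.eval z * conj (P.eval z)
      = n * ∑ m ∈ P.support, P.coeff m * conj (P.coeff m) := by
  have h : ∀ z : ℂ, P.eval z * conj (P.eval z) = ∑ m ∈ P.support, ∑ m' ∈ P.support,
      P.coeff m * conj (P.coeff m') * (z ^ m * conj (z ^ m')) := by
    intro z
    rw [eval_eq_sum, Polynomial.sum, map_sum, Finset.sum_mul_sum]
    refine Finset.sum_congr rfl fun m _ => Finset.sum_congr rfl fun m' _ => ?_
    rw [map_mul]; ring
  simp_rw [h]
  rw [Finset.sum_comm, Finset.mul_sum]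
  refine Finset.sum_congr rfl fun m hm => ?_
  rw [Finset.sum_comm]
  simp_rw [← Finset.mul_sum]
  rw [Finset.sum_congr rfl fun m' hm' => by
    rw [sum_nthRoots_pow_mul_conj hn hω (hS m hm) (hS m' hm')]]
  simp only [mul_ite, mul_zero, Finset.sum_ite_eq, hm, if_true]
  ring

lemma variance_identity {n : ℕ} (hn : 1 ≤ n) (P : ℂ[X]) {z : ℂ} (hz : z ^ n = 1) :
    ∑ m ∈ P.support, (P.support.card * (P.coeff m * z ^ m) - P.eval z) *
        conj (P.support.card * (P.coeff m * z ^ m) - P.eval z)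
      = P.support.card ^ 2 * ∑ m ∈ P.support, P.coeff m * conj (P.coeff m)
        - P.support.card * (P.eval z * conj (P.eval z)) := by
  have h1 := mul_conj_of_pow_eq_one hn hz
  have hv : P.eval z = ∑ m ∈ P.support, P.coeff m * z ^ m := by
    rw [eval_eq_sum, Polynomial.sum]
  have hv' : conj (P.eval z) = ∑ m ∈ P.support, conj (P.coeff m * z ^ m) := by
    rw [hv, map_sum]
  generalize P.eval z = v at *
  have h : ∀ m ∈ P.support, (P.support.card * (P.coeff m * z ^ m) - v) *
        conj (P.support.card * (P.coeff m * z ^ m) - v)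
      = P.support.card ^ 2 * (P.coeff m * conj (P.coeff m))
        - P.support.card * conj v * (P.coeff m * z ^ m)
        - P.support.card * v * conj (P.coeff m * z ^ m) + v * conj v := by
    intro m _
    have h2 : z ^ m * conj z ^ m = 1 := by rw [← mul_pow, h1, one_pow]
    simp only [map_sub, map_mul, map_pow, map_natCast]
    linear_combination (P.support.card ^ 2 * (P.coeff m * conj (P.coeff m))) * h2
  rw [Finset.sum_congr rfl h, Finset.sum_add_distrib, Finset.sum_sub_distrib,
    Finset.sum_sub_distrib, ← Finset.mul_sum, ← Finset.mul_sum, ← Finset.mul_sum, ← hv, ← hv',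
    Finset.sum_const, nsmul_eq_mul]
  ring

/-- Under `|S| |T| = n`, the terms of `P` are all equal at each root of unity where `P` does not
vanish. -/
lemma terms_eq {n : ℕ} (hn : 1 ≤ n) {ω : ℂ} (hω : IsPrimitiveRoot ω n) (P : ℂ[X])
    (hS : ∀ m ∈ P.support, m < n)
    (hcard : P.support.card *
      ((nthRoots n (1 : ℂ)).toFinset.filter (fun z => P.eval z ≠ 0)).card = n)
    {z : ℂ} (hz : z ^ n = 1) (hPz : P.eval z ≠ 0) {m : ℕ} (hm : m ∈ P.support) :
    P.support.card * (P.coeff m * z ^ m) = P.eval z := by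
  set T := (nthRoots n (1 : ℂ)).toFinset.filter (fun z => P.eval z ≠ 0) with hT
  have hTz : ∀ z ∈ T, z ^ n = 1 := by
    intro z hz
    rw [hT, Finset.mem_filter, Multiset.mem_toFinset, mem_nthRoots hn] at hz
    exact hz.1
  have hpars : ∑ z ∈ T, P.eval z * conj (P.eval z)
      = n * ∑ m ∈ P.support, P.coeff m * conj (P.coeff m) := by
    rw [← parseval hn hω P hS, hT, Finset.sum_filter]
    refine Finset.sum_congr rfl fun z _ => ?_
    by_cases h : P.eval z = 0 <;> simp [h]
  have hcard' : (P.support.card : ℂ) * T.card = n := by exact_mod_cast hcard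
  have h0 : ∑ z ∈ T, ∑ m ∈ P.support, (P.support.card * (P.coeff m * z ^ m) - P.eval z) *
        conj (P.support.card * (P.coeff m * z ^ m) - P.eval z) = 0 := by
    rw [Finset.sum_congr rfl fun z hz => variance_identity hn P (hTz z hz),
      Finset.sum_sub_distrib, ← Finset.mul_sum, ← Finset.mul_sum, hpars, Finset.sum_const, nsmul_eq_mul]
    linear_combination (P.support.card *
      ∑ m ∈ P.support, P.coeff m * conj (P.coeff m)) * hcard'
  have h0' : ∑ z ∈ T, ∑ m ∈ P.support,
      Complex.normSq (P.support.card * (P.coeff m * z ^ m) - P.eval z) = 0 := by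
    simp_rw [Complex.mul_conj] at h0
    exact_mod_cast h0
  have hzT : z ∈ T := by
    rw [hT, Finset.mem_filter, Multiset.mem_toFinset, mem_nthRoots hn]
    exact ⟨hz, hPz⟩
  rw [Finset.sum_eq_zero_iff_of_nonneg
    fun z _ => Finset.sum_nonneg fun m _ => Complex.normSq_nonneg _] at h0'
  have h2 := h0' z hzT
  rw [Finset.sum_eq_zero_iff_of_nonneg fun m _ => Complex.normSq_nonneg _] at h2
  exact sub_eq_zero.mp (Complex.normSq_eq_zero.mp (h2 m hm))

/-- If `T` consists of `n`-th roots of unity, `S ⊆ {0, …, n - 1}`, `|S| |T| = n`, and the ratios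
`u = z / z₀` with `z ∈ T` satisfy `u ^ m = u ^ m₀` for `m ∈ S`, then `S` is a full residue class
modulo a divisor `r` of `n`, namely the least common multiple of the orders of these `u`. -/
lemma support_eq_residue_class {n : ℕ} (hn : 1 ≤ n) (S : Finset ℕ) (T : Finset ℂ)
    (hS : ∀ m ∈ S, m < n) (hT : ∀ z ∈ T, z ^ n = 1) (hcard : S.card * T.card = n)
    {z₀ : ℂ} (hz₀ : z₀ ∈ T) {m₀ : ℕ}
    (h : ∀ z ∈ T, ∀ m ∈ S, (z / z₀) ^ m = (z / z₀) ^ m₀) :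
    ∃ r l : ℕ, r ∣ n ∧ l < r ∧ S = (Finset.range (n / r)).image (fun i => l + i * r) := by
  have hz0 : z₀ ≠ 0 := by
    rintro rfl
    have := hT 0 hz₀
    rw [zero_pow (by omega)] at this
    exact zero_ne_one this
  set r := T.lcm (fun z => orderOf (z / z₀)) with hr
  have hrn : r ∣ n := Finset.lcm_dvd fun z hz => orderOf_dvd_of_pow_eq_one (by
    rw [div_pow, hT z hz, hT z₀ hz₀, div_one])
  have hrpos : 0 < r := Nat.pos_of_dvd_of_pos hrn (by omega)
  have hTr : T.card ≤ r := by
    have hsub : T.image (fun z => z / z₀) ⊆ (nthRoots r (1 : ℂ)).toFinset := by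
      intro u hu
      obtain ⟨z, hz, rfl⟩ := Finset.mem_image.mp hu
      rw [Multiset.mem_toFinset, mem_nthRoots hrpos]
      exact orderOf_dvd_iff_pow_eq_one.mp (Finset.dvd_lcm (f := fun z => orderOf (z / z₀)) hz)
    calc T.card = (T.image (fun z => z / z₀)).card :=
          (Finset.card_image_of_injective _ fun _ _ hab => (div_left_inj' hz0).mp hab).symm
      _ ≤ _ := Finset.card_le_card hsub
      _ ≤ _ := Multiset.toFinset_card_le _
      _ ≤ r := card_nthRoots r 1
  have hmod : ∀ m ∈ S, m % r = m₀ % r := by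
    intro m hm
    refine (Nat.modEq_iff_dvd.mpr ?_ : m ≡ m₀ [MOD r])
    rw [← Int.dvd_natAbs, Int.natCast_dvd_natCast]
    refine Finset.lcm_dvd fun z hz => ?_
    rw [← Int.natCast_dvd_natCast, Int.dvd_natAbs]
    have hu : IsUnit (z / z₀) := IsUnit.of_pow_eq_one (n := n)
      (by rw [div_pow, hT z hz, hT z₀ hz₀, div_one]) (by omega)
    obtain ⟨u, hu⟩ := hu
    have hum := h z hz m hm
    rw [← hu] at hum ⊢
    rw [orderOf_units]
    exact Nat.modEq_iff_dvd.mp (pow_eq_pow_iff_modEq.mp (by exact_mod_cast hum))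
  refine ⟨r, m₀ % r, hrn, Nat.mod_lt _ hrpos, ?_⟩
  refine Finset.eq_of_subset_of_card_le ?_ ?_
  · intro m hm
    refine Finset.mem_image.mpr ⟨m / r, ?_, ?_⟩
    · rw [Finset.mem_range]
      exact Nat.div_lt_div_of_lt_of_dvd hrn (hS m hm)
    · rw [← hmod m hm, mul_comm]
      exact Nat.mod_add_div m r
  · refine Finset.card_image_le.trans ?_
    rw [Finset.card_range]
    refine Nat.div_le_of_le_mul ?_
    calc n = S.card * T.card := hcard.symm
      _ ≤ S.card * r := Nat.mul_le_mul_left _ hTr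
      _ = r * S.card := mul_comm _ _

/-- Let `n ≥ 1`, `ω = e^{2πi/n}`, and let `P` be a non-zero complex polynomial of
degree at most `n - 1` having exactly `k` distinct roots among the `n`-th roots of
unity. If `w(P) * (n - k) = n`, then `P(z) = c · D_{n,r,l}(ω^j z)` for some `c ≠ 0`,
a divisor `r` of `n`, some `0 ≤ l ≤ r - 1` and some `0 ≤ j ≤ n - 1`. -/
theorem equality_case (n : ℕ) (hn : 1 ≤ n)
    (ω : ℂ) (hω : ω = Complex.exp (2 * Real.pi * Complex.I / n))
    (P : Polynomial ℂ) (hP : P ≠ 0) (hdeg : P.natDegree ≤ n - 1)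
    (k : ℕ)
    (hk : k = (((Polynomial.nthRoots n (1 : ℂ)).toFinset).filter
      (fun z => P.eval z = 0)).card)
    (heq : P.support.card * (n - k) = n) :
    ∃ (c : ℂ) (r l j : ℕ), c ≠ 0 ∧ r ∣ n ∧ l < r ∧ j < n ∧
      P = Polynomial.C c *
        ((Dpoly n r l).comp (Polynomial.C (ω ^ j) * Polynomial.X)) := by
  have hprim : IsPrimitiveRoot ω n := by
    rw [hω]; exact Complex.isPrimitiveRoot_exp n (by omega)
  have : NeZero n := ⟨by omega⟩
  have hS : ∀ m ∈ P.support, m < n := fun m hm => by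
    have := le_natDegree_of_mem_supp m hm
    omega
  set T := (nthRoots n (1 : ℂ)).toFinset.filter (fun z => P.eval z ≠ 0) with hT
  have hTk : T.card = n - k := by
    have h1 := Finset.card_filter_add_card_filter_not
      (s := (nthRoots n (1 : ℂ)).toFinset) (fun z => P.eval z = 0)
    have h2 : ((nthRoots n (1 : ℂ)).toFinset).card = n := by
      rw [nthRoots_toFinset_eq_image hn hprim, Finset.card_image_of_injOn, Finset.card_range]
      intro a ha b hb hab
      exact hprim.pow_inj (by simpa using ha) (by simpa using hb) hab
    rw [h2, ← hk] at h1
    have h3 : T.card = ((nthRoots n (1 : ℂ)).toFinset.filter (fun z => ¬ P.eval z = 0)).card := rfl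
    omega
  rw [← hTk] at heq
  have hTmem : ∀ z ∈ T, z ^ n = 1 ∧ P.eval z ≠ 0 := by
    intro z hz
    rwa [hT, Finset.mem_filter, Multiset.mem_toFinset, mem_nthRoots hn] at hz
  have hTne : T.Nonempty := by
    rw [← Finset.card_pos]
    refine Nat.pos_of_ne_zero fun h => ?_
    rw [h] at heq
    omega
  obtain ⟨z₀, hz₀⟩ := hTne
  obtain ⟨m₀, hm₀⟩ := support_nonempty.mpr hP
  have hs : (P.support.card : ℂ) ≠ 0 := by
    exact_mod_cast (Finset.card_pos.mpr ⟨m₀, hm₀⟩).ne'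
  have hz0 : z₀ ≠ 0 := by
    rintro rfl
    have := (hTmem 0 hz₀).1
    rw [zero_pow (by omega)] at this
    exact zero_ne_one this
  have hterm : ∀ z ∈ T, ∀ m ∈ P.support, P.coeff m * z ^ m = P.coeff m₀ * z ^ m₀ := by
    intro z hz m hm
    obtain ⟨h1, h2⟩ := hTmem z hz
    apply mul_left_cancel₀ hs
    rw [terms_eq hn hprim P hS heq h1 h2 hm, terms_eq hn hprim P hS heq h1 h2 hm₀]
  have hratio : ∀ z ∈ T, ∀ m ∈ P.support, (z / z₀) ^ m = (z / z₀) ^ m₀ := by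
    intro z hz m hm
    have e1 := hterm z hz m hm
    have e2 := hterm z₀ hz₀ m hm
    rw [div_pow, div_pow, ← mul_div_mul_left (z ^ m) _ (mem_support_iff.mp hm), e1, e2,
      mul_div_mul_left _ _ (mem_support_iff.mp hm₀)]
  obtain ⟨r, l, hrn, hl, hSeq⟩ :=
    support_eq_residue_class hn P.support T hS (fun z hz => (hTmem z hz).1) heq hz₀ hratio
  obtain ⟨j, hj, hjz⟩ := hprim.eq_pow_of_pow_eq_one (ξ := z₀⁻¹)
    (by rw [inv_pow, (hTmem z₀ hz₀).1, inv_one])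
  refine ⟨P.coeff m₀ * z₀ ^ m₀, r, l, j,
    mul_ne_zero (mem_support_iff.mp hm₀) (pow_ne_zero _ hz0), hrn, hl, hj, ?_⟩
  have hcoeff : ∀ m ∈ P.support, C (P.coeff m) * X ^ m
      = C (P.coeff m₀ * z₀ ^ m₀) * (C (ω ^ j) * X) ^ m := by
    intro m hm
    rw [← hterm z₀ hz₀ m hm, hjz, mul_pow, ← C_pow, ← mul_assoc, ← C_mul, inv_pow,
      mul_inv_cancel_right₀ (pow_ne_zero _ hz0)]
  have hinj : Set.InjOn (fun i => l + i * r) (Finset.range (n / r) : Set ℕ) := by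
    intro a _ b _ hab
    exact Nat.eq_of_mul_eq_mul_right (by omega : 0 < r) (Nat.add_left_cancel hab)
  conv_lhs => rw [P.as_sum_support_C_mul_X_pow]
  rw [Finset.sum_congr rfl hcoeff, ← Finset.mul_sum, hSeq, Finset.sum_image hinj, Dpoly]
  simp only [mul_comp, pow_comp, X_comp, Polynomial.sum_comp, pow_add, Finset.mul_sum]
end

section
/- Let n ≥ 1 and let P(z) = p_0 + p_1 z + ... + p_{n−1} z^{n−1} be a non-zero complex polynomial. Let C be the n×n circulant matrix generated by the coefficients of P. Then w(P) · rank(C) ≥ n. -/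
/-!
Every row of `C` is a cyclic shift of `p`, hence has exactly `w(P)` non-zero entries. Choose a set
`b` of rows forming a basis of the row space, so `b` has `rank C` elements. Since `p ≠ 0`, every
column of `C` contains a non-zero entry, so no coordinate vanishes on the whole row space, and
hence none vanishes on all of `b`. The supports of the rows in `b` therefore cover all `n`
columns, which gives `n ≤ rank C * w(P)`.
-/

open Matrix

/-- Let `n ≥ 1` and `P(z) = p_0 + p_1 z + ⋯ + p_{n-1} z^{n-1}` a non-zero polynomial,
and let `C` be the circulant matrix `C i j = p ((j - i) mod n)`. Then
`w(P) * rank C ≥ n`, where `w(P)` is the number of non-zero coefficients of `P`. -/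
theorem weight_mul_rank_ge (n : ℕ) (hn : 1 ≤ n)
    (p : Fin n → ℂ) (hp : p ≠ 0)
    (C : Matrix (Fin n) (Fin n) ℂ)
    (hC : ∀ i j : Fin n, C i j = p (j - i)) :
    (Finset.univ.filter (fun i : Fin n => p i ≠ 0)).card * C.rank ≥ n := by
  classical
  haveI : NeZero n := ⟨by omega⟩
  obtain ⟨b, hbs, hspan, hli⟩ := exists_linearIndependent ℂ (Set.range C.row)
  have hfin : b.Finite := (Set.finite_range _).subset hbs
  haveI : Fintype b := hfin.fintype
  have hcard : b.toFinset.card = C.rank := by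
    rw [Matrix.rank_eq_finrank_span_row, ← hspan, finrank_span_set_eq_card hli]
  have hcover : (Finset.univ : Finset (Fin n)) ⊆
      b.toFinset.biUnion (fun v => Finset.univ.filter (fun j => v j ≠ 0)) := by
    intro j _
    by_contra hj
    have hzero : ∀ v ∈ b, v j = 0 := by
      intro v hv
      by_contra hvj
      exact hj (Finset.mem_biUnion.2 ⟨v, by simpa using hv, by simpa using hvj⟩)
    have hle : Submodule.span ℂ (Set.range C.row) ≤
        LinearMap.ker (LinearMap.proj j : (Fin n → ℂ) →ₗ[ℂ] ℂ) := by
      rw [← hspan, Submodule.span_le]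
      intro v hv
      exact hzero v hv
    obtain ⟨i, hi⟩ := Function.ne_iff.1 hp
    -- The entry `p i` occurs in column `j` in the row of index `j - i`.
    have h0 : C (j - i) j = 0 := hle (Submodule.subset_span ⟨j - i, rfl⟩)
    rw [hC, sub_sub_cancel] at h0
    exact hi h0
  have hsupp : ∀ v ∈ b.toFinset, (Finset.univ.filter (fun j => v j ≠ 0)).card ≤
      (Finset.univ.filter (fun i : Fin n => p i ≠ 0)).card := by
    intro v hv
    obtain ⟨i, rfl⟩ := hbs (Set.mem_toFinset.1 hv)
    refine Finset.card_le_card_of_injOn (fun j => j - i) ?_ (sub_left_injective.injOn)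
    intro j hj
    simpa [Matrix.row, hC] using hj
  have h := (Finset.card_le_card hcover).trans (Finset.card_biUnion_le_card_mul _ _ _ hsupp)
  rw [hcard, Finset.card_univ, Fintype.card_fin, mul_comm] at h
  exact h
end

section
/- Let n ≥ 1 and let P(z) = p_0 + p_1 z + ... + p_{n−1} z^{n−1} be a non-zero complex polynomial. Let C be the n×n circulant matrix generated by the coefficients of P and set r = rank(C). If w(P) · r = n, then r divides n and the support of the coefficient vector (p_0, ..., p_{n−1}) consists exactly of the indices congruent to some fixed l modulo r with 0 ≤ l ≤ r−1; equivalently, P(z) = z^l Q(z^r) for some complex polynomial Q(z) = q_0 + q_1 z + ... + q_{n/r − 1} z^{n/r − 1} with all coefficients q_0, ..., q_{n/r−1} non-zero. -/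
open Matrix Polynomial

/-!
Extend the coefficient vector to an `n`-periodic sequence `f` on `ℕ`. The `r + 1` shifts
`f (· + k)`, `k ≤ r`, are rows of the circulant matrix, whose row space has dimension `r`, so they
are linearly dependent and `f` satisfies a linear recurrence of some order `m ≤ r`
(`exists_recurrence`). Since `f ≠ 0`, no `r` consecutive terms of `f` vanish
(`eq_zero_of_window_eq_zero`): each of the `n` cyclic windows of length `r` meets the support.
Every support point lies in exactly `r` windows, so the total number of incidences is
`w(P) * r = n`; hence each window contains exactly one support point (`window_sum_eq_one`).
Comparing the windows starting at `a` and at `a + 1` shows that the support is `r`-periodic, with a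
single representative `l` in `[0, r)`.
-/

/-- A sequence satisfying a linear recurrence of order `m ≤ r` that vanishes on `r` consecutive
indices vanishes from there on. -/
lemma eq_zero_of_window_eq_zero (f c : ℕ → ℂ) (r m a : ℕ) (hm : m ≤ r) (hc : c m ≠ 0)
    (hrec : ∀ j, ∑ i ∈ Finset.range (m + 1), c i * f (j + i) = 0)
    (hz : ∀ i < r, f (a + i) = 0) (k : ℕ) : f (a + k) = 0 := by
  induction k using Nat.strong_induction_on with
  | _ k ih =>
    by_cases hk : k < r
    · exact hz k hk
    · have h := hrec (a + (k - m))
      rw [Finset.sum_range_succ, Finset.sum_eq_zero, zero_add] at h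
      · have e : a + (k - m) + m = a + k := by omega
        rw [e] at h
        exact (mul_eq_zero.mp h).resolve_left hc
      · intro i hi
        have hi' := Finset.mem_range.mp hi
        have e : a + (k - m) + i = a + (k - m + i) := by omega
        rw [e, ih _ (by omega), mul_zero]

lemma sum_range_shift_of_periodic (b : ℕ → ℕ) (n : ℕ) (hb : ∀ k, b (k + n) = b k) (i : ℕ) :
    ∑ a ∈ Finset.range n, b (a + i) = ∑ a ∈ Finset.range n, b a := by
  induction i with
  | zero => simp
  | succ i ih =>
    rw [← ih]
    have h1 := Finset.sum_range_succ (fun a => b (a + i)) n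
    have h2 := Finset.sum_range_succ' (fun a => b (a + i)) n
    have h3 : b (n + i) = b (0 + i) := by rw [add_comm n i, hb, zero_add]
    have h4 : ∀ a, a + 1 + i = a + (i + 1) := fun a => by omega
    simp only [h4] at h2
    omega

/-- Double counting: the `n` cyclic windows have total weight `w * r = n`, so if each has weight
at least one then each has weight exactly one. -/
lemma window_sum_eq_one (b : ℕ → ℕ) (n r : ℕ) (hn : 0 < n) (hb : ∀ k, b (k + n) = b k)
    (hw : (∑ a ∈ Finset.range n, b a) * r = n)
    (h1 : ∀ a, 1 ≤ ∑ i ∈ Finset.range r, b (a + i)) (a : ℕ) :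
    ∑ i ∈ Finset.range r, b (a + i) = 1 := by
  have hsum : ∑ a ∈ Finset.range n, ∑ i ∈ Finset.range r, b (a + i)
      = ∑ a ∈ Finset.range n, 1 := by
    rw [Finset.sum_comm]
    simp only [sum_range_shift_of_periodic b n hb]
    simp only [Finset.sum_const, Finset.card_range, smul_eq_mul, mul_one]
    rw [mul_comm]
    exact hw
  have hall := (Finset.sum_eq_sum_iff_of_le (fun a _ => h1 a)).mp hsum.symm
  have hper : Function.Periodic (fun a => ∑ i ∈ Finset.range r, b (a + i)) n := by
    intro x
    refine Finset.sum_congr rfl fun i _ => ?_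
    rw [add_right_comm, hb]
  have := hper.map_mod_nat a
  exact this.symm.trans (hall _ (Finset.mem_range.mpr (Nat.mod_lt _ hn))).symm

/-- The shifts of the coefficient vector by `0, …, r` are `r + 1` vectors in the `r`-dimensional
row space; the last non-zero coefficient of a dependency gives the order of the recurrence. -/
lemma exists_recurrence (n : ℕ) [NeZero n] (p : Fin n → ℂ) (C : Matrix (Fin n) (Fin n) ℂ)
    (hC : ∀ i j : Fin n, C i j = p (j - i)) :
    ∃ (c : ℕ → ℂ) (m : ℕ), m ≤ C.rank ∧ c m ≠ 0 ∧
      ∀ j : ℕ, ∑ i ∈ Finset.range (m + 1), c i * p (Fin.ofNat n (j + i)) = 0 := by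
  classical
  set r := C.rank with hr
  let v : Fin (r + 1) → (Fin n → ℂ) := fun k => C.row (-(Fin.ofNat n k))
  have hdep : ¬ LinearIndependent ℂ v := by
    intro hli
    have hle : Submodule.span ℂ (Set.range v) ≤ Submodule.span ℂ (Set.range C.row) := by
      apply Submodule.span_mono
      rintro _ ⟨k, rfl⟩
      exact ⟨_, rfl⟩
    have h1 := Submodule.finrank_mono hle
    rw [finrank_span_eq_card hli, ← Matrix.rank_eq_finrank_span_row, ← hr] at h1
    simp at h1
  obtain ⟨g, hg, k₀, hk₀⟩ := Fintype.not_linearIndependent_iff.mp hdep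
  let c : ℕ → ℂ := fun i => if h : i < r + 1 then g ⟨i, h⟩ else 0
  have hc₀ : c k₀ ≠ 0 := by
    simp only [c, k₀.2, dite_true]
    exact hk₀
  let m := Nat.findGreatest (fun i => c i ≠ 0) r
  have hm : m ≤ r := Nat.findGreatest_le r
  refine ⟨c, m, hm, Nat.findGreatest_spec (P := fun i => c i ≠ 0)
    (Nat.lt_succ_iff.mp k₀.2) hc₀, fun j => ?_⟩
  have h := congrFun hg (Fin.ofNat n j)
  have hfull : ∑ i ∈ Finset.range (r + 1), c i * p (Fin.ofNat n (j + i)) = 0 := by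
    rw [Finset.sum_range]
    rw [Finset.sum_apply] at h
    refine Eq.trans ?_ h
    refine Finset.sum_congr rfl fun i _ => ?_
    have e : Fin.ofNat n j - -(Fin.ofNat n (i : ℕ)) = Fin.ofNat n (j + i) := by
      rw [sub_neg_eq_add]
      ext
      simp [Fin.val_add, Fin.ofNat]
    simp only [Pi.smul_apply, smul_eq_mul, v, Matrix.row, hC, e, c, i.2, dite_true]
  rw [← hfull]
  refine Finset.sum_subset (Finset.range_mono (by omega)) fun i hi hi' => ?_
  rw [Finset.mem_range] at hi hi'
  have := Nat.findGreatest_is_greatest (P := fun i => c i ≠ 0) (n := r) (k := i)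
    (show m < i by omega) (by omega)
  rw [not_not.mp this, zero_mul]

lemma sum_range_mul_eq {M : Type*} [AddCommMonoid M] (g : ℕ → M) (w r : ℕ) :
    ∑ i ∈ Finset.range (w * r), g i
      = ∑ k ∈ Finset.range w, ∑ j ∈ Finset.range r, g (k * r + j) := by
  induction w with
  | zero => simp
  | succ w ih => rw [Nat.succ_mul, Finset.sum_range_add, ih, Finset.sum_range_succ]

/-- Let `n ≥ 1`, `P(z) = p_0 + p_1 z + ⋯ + p_{n-1} z^{n-1}` a non-zero polynomial,
`C` the circulant matrix `C i j = p ((j - i) mod n)` and `r = rank C`. If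
`w(P) * r = n`, then `r ∣ n` and the support of `(p_0, …, p_{n-1})` consists exactly
of the indices congruent to some fixed `l` modulo `r` with `0 ≤ l ≤ r - 1`;
equivalently `P(z) = z^l Q(z^r)` for a polynomial
`Q(z) = q_0 + q_1 z + ⋯ + q_{n/r - 1} z^{n/r - 1}` all of whose coefficients
`q_0, …, q_{n/r - 1}` are non-zero. -/
theorem equality_support_structure (n : ℕ) (hn : 1 ≤ n)
    (p : Fin n → ℂ) (hp : p ≠ 0)
    (P : Polynomial ℂ)
    (hP : P = ∑ i : Fin n, Polynomial.C (p i) * Polynomial.X ^ (i : ℕ))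
    (C : Matrix (Fin n) (Fin n) ℂ)
    (hC : ∀ i j : Fin n, C i j = p (j - i))
    (r : ℕ) (hr : r = C.rank)
    (heq : (Finset.univ.filter (fun i : Fin n => p i ≠ 0)).card * r = n) :
    r ∣ n ∧ ∃ l : ℕ, l < r ∧
      (∀ i : Fin n, p i ≠ 0 ↔ (i : ℕ) % r = l) ∧
      ∃ Q : Polynomial ℂ, Q.natDegree ≤ n / r - 1 ∧
        (∀ i : ℕ, i < n / r → Q.coeff i ≠ 0) ∧
        P = Polynomial.X ^ l * Q.comp (Polynomial.X ^ r) := by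
  classical
  have : NeZero n := ⟨by omega⟩
  set w := (Finset.univ.filter (fun i : Fin n => p i ≠ 0)).card with hw
  have hrpos : 0 < r := by
    rcases Nat.eq_zero_or_pos r with h | h
    · rw [h] at heq
      omega
    · exact h
  -- `f` is the periodic extension of `p`, and `b` the indicator of its support.
  let f : ℕ → ℂ := fun k => p (Fin.ofNat n k)
  have hfp : ∀ i : Fin n, f i = p i := fun i => by simp [f]
  have hfper : ∀ k, f (k + n) = f k := fun k => by
    simp only [f]
    congr 1
    ext
    simp [Fin.ofNat]
  have hfmul : ∀ k t, f (k + n * t) = f k := fun k t => by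
    have h : Function.Periodic f n := hfper
    have := h.nat_mul t k
    simpa [mul_comm] using this
  let b : ℕ → ℕ := fun k => if f k ≠ 0 then 1 else 0
  have hb1 : ∀ k, b k = 1 ↔ f k ≠ 0 := fun k => by simp [b]
  have hbper : ∀ k, b (k + n) = b k := fun k => by simp only [b, hfper]
  have hbw : ∑ a ∈ Finset.range n, b a = w := by
    rw [Finset.sum_range, hw, Finset.card_filter]
    exact Finset.sum_congr rfl fun i _ => by simp only [b, hfp]
  obtain ⟨c, m, hm, hc, hrec⟩ := exists_recurrence n p C hC
  rw [← hr] at hm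
  have hwin : ∀ a, 1 ≤ ∑ i ∈ Finset.range r, b (a + i) := by
    intro a
    by_contra hlt
    have h0 : ∑ i ∈ Finset.range r, b (a + i) = 0 := by omega
    rw [Finset.sum_eq_zero_iff] at h0
    have hz : ∀ i < r, f (a + i) = 0 := fun i hi => by
      have := h0 i (Finset.mem_range.mpr hi)
      simpa [b] using this
    apply hp
    funext i
    -- Move `i` past `a` by a multiple of the period.
    have hle : a ≤ n * a := Nat.le_mul_of_pos_left a (by omega)
    have := eq_zero_of_window_eq_zero f c r m a hm hc hrec hz (i + n * a - a)
    rw [show a + (i + n * a - a) = i + n * a by omega, hfmul, hfp] at this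
    exact this
  have hone := window_sum_eq_one b n r (by omega) hbper (by rw [hbw]; exact heq) hwin
  have hbr : Function.Periodic b r := by
    intro a
    have h1 := Finset.sum_range_succ (fun i => b (a + i)) r
    have h2 := Finset.sum_range_succ' (fun i => b (a + i)) r
    have h3 := hone a
    have h4 := hone (a + 1)
    have h5 : ∑ i ∈ Finset.range r, b (a + (i + 1)) = ∑ i ∈ Finset.range r, b (a + 1 + i) :=
      Finset.sum_congr rfl fun i _ => by rw [add_assoc a 1 i, add_comm 1 i]
    rw [add_zero] at h2
    omega
  have h0 := hone 0
  simp only [zero_add] at h0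
  obtain ⟨l, hl, hbl⟩ : ∃ l < r, b l = 1 := by
    obtain ⟨l, hl, hne⟩ := Finset.exists_ne_zero_of_sum_ne_zero (by rw [h0]; exact one_ne_zero)
    refine ⟨l, Finset.mem_range.mp hl, ?_⟩
    by_cases h : f l = 0
    · simp [b, h] at hne
    · simp [b, h]
  have huniq : ∀ j < r, b j = 1 → j = l := by
    intro j hj hbj
    by_contra hne
    have hsub : ∑ i ∈ ({j, l} : Finset ℕ), b i ≤ ∑ i ∈ Finset.range r, b i := by
      apply Finset.sum_le_sum_of_subset
      intro x hx
      rw [Finset.mem_insert, Finset.mem_singleton] at hx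
      rw [Finset.mem_range]
      omega
    rw [Finset.sum_pair hne] at hsub
    omega
  have hsupp : ∀ k, f k ≠ 0 ↔ k % r = l := by
    intro k
    rw [← hb1, ← hbr.map_mod_nat k]
    constructor
    · exact huniq _ (Nat.mod_lt _ hrpos)
    · intro h
      rw [h, hbl]
  have hdiv : n / r = w := by rw [← heq, Nat.mul_div_cancel _ hrpos]
  refine ⟨⟨w, by rw [mul_comm]; exact heq.symm⟩, l, hl, fun i => by rw [← hfp, hsupp], ?_⟩
  rw [hdiv]
  refine ⟨∑ k ∈ Finset.range w, Polynomial.C (f (k * r + l)) * Polynomial.X ^ k, ?_, ?_, ?_⟩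
  · refine Polynomial.natDegree_sum_le_of_forall_le _ _ fun k hk => ?_
    have := Finset.mem_range.mp hk
    exact (Polynomial.natDegree_C_mul_X_pow_le _ _).trans (by omega)
  · intro i hi
    have hcoeff : (∑ k ∈ Finset.range w,
        Polynomial.C (f (k * r + l)) * Polynomial.X ^ k).coeff i = f (i * r + l) := by
      simp [Polynomial.finsetSum_coeff, Polynomial.coeff_C_mul, Polynomial.coeff_X_pow, hi]
    rw [hcoeff, hsupp, mul_comm, Nat.mul_add_mod, Nat.mod_eq_of_lt hl]
  · have hP' : P = ∑ i ∈ Finset.range (w * r), Polynomial.C (f i) * Polynomial.X ^ i := by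
      rw [heq, hP, Finset.sum_range]
      exact Finset.sum_congr rfl fun i _ => by rw [hfp]
    rw [hP', sum_range_mul_eq, Polynomial.sum_comp, Finset.mul_sum]
    refine Finset.sum_congr rfl fun k _ => ?_
    rw [Finset.sum_eq_single l]
    · rw [Polynomial.mul_comp, Polynomial.C_comp, Polynomial.pow_comp, Polynomial.X_comp]
      ring
    · intro j hj hne
      have hj' := Finset.mem_range.mp hj
      have : f (k * r + j) = 0 := by
        by_contra h
        rw [← ne_eq, hsupp, mul_comm, Nat.mul_add_mod, Nat.mod_eq_of_lt hj'] at h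
        exact hne h
      rw [this, Polynomial.C_0, zero_mul]
    · intro h
      exact absurd (Finset.mem_range.mpr hl) h
end

section
/- Let n ≥ 1 be a natural number, ω = e^{2πi/n}, and let P(z) be a non-zero complex polynomial with deg P ≤ n−1 having exactly k distinct roots among the n-th roots of unity. Then w(P) · (n − k) = n if and only if there exist a non-zero complex number c, a divisor r of n, an integer l with 0 ≤ l ≤ r−1, and an integer j with 0 ≤ j ≤ n−1, such that P(z) = c · D_{n,r,l}(ω^j z). -/
/-!
Write `w = w(P)` and `r = n - k`, the number of `n`-th roots of unity at which `P` does not vanish.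

Suppose `r w = n`. By a Vandermonde argument (`exists_eval_ne_zero`), `P` cannot vanish at `w`
consecutive powers of `ω`, so every cyclic window of length `w` among the exponents contains a
nonroot. The circle is tiled by `r` such windows, starting at any offset, and there are only `r`
nonroots, so every window contains exactly one (`window_eq_one`). Comparing windows shifted by one
shows that the nonroots are `ω^s` with `s` in a single residue class `s₀` modulo `w`
(`exists_residue`). Hence `Q(z) = P(ω^{s₀} z)` vanishes at all `n`-th roots of unity that are not
`r`-th roots of unity, and is divisible by `(z^n - 1)/(z^r - 1) = 1 + z^r + ⋯ + z^{(w-1)r}`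
(`comb_dvd`). The quotient has degree less than `r`, so each of its monomials contributes `w`
monomials to `Q`; as `Q` has only `w`, the quotient is a single monomial (`eq_monomial_mul_comb`).

Conversely, `D_{n,r,l}` has `n / r` monomials, and an `n`-th root of unity is a nonroot of it exactly
when it is one of the `r` many `r`-th roots of unity; neither count changes under rotation.
-/

open Polynomial

/-- A polynomial of degree less than `n` with `w` monomials that vanishes at `w` consecutive powers
of a primitive `n`-th root of unity is zero, by invertibility of a Vandermonde matrix. -/
lemma exists_eval_ne_zero {n : ℕ} {ω : ℂ} (hω : IsPrimitiveRoot ω n) {P : ℂ[X]} (hP : P ≠ 0)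
    (hdeg : P.natDegree < n) (s : ℕ) :
    ∃ x < P.support.card, P.eval (ω ^ (s + x)) ≠ 0 := by
  by_contra! h
  let e := P.support.orderEmbOfFin rfl
  have he : ∀ i, e i ∈ P.support := fun i => Finset.orderEmbOfFin_mem _ _ i
  have hlt : ∀ i, e i < n := fun i => (le_natDegree_of_mem_supp _ (he i)).trans_lt hdeg
  have hn : 0 < n := by omega
  have hinj : Function.Injective (fun i => ω ^ e i) := by
    intro i j hij
    exact e.injective (hω.pow_inj (hlt i) (hlt j) hij)
  have hv := Matrix.eq_zero_of_forall_pow_sum_mul_pow_eq_zero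
    (v := fun i => P.coeff (e i) * (ω ^ e i) ^ s) hinj (by
      intro x
      have hx := h x x.2
      rw [eval_eq_sum, Polynomial.sum_def] at hx
      have himg : Finset.univ.image e = P.support := Finset.image_orderEmbOfFin_univ _ _
      have hsum := Finset.sum_image (s := Finset.univ) (g := e)
        (f := fun m => P.coeff m * (ω ^ (s + x.1)) ^ m) (fun a _ b _ hab => e.injective hab)
      rw [himg, hx] at hsum
      rw [hsum]
      exact Finset.sum_congr rfl fun i _ => by ring)
  have hcard : 0 < P.support.card := Finset.card_pos.mpr (by simpa using hP)
  have h0 := congrFun hv ⟨0, hcard⟩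
  have hω0 : ω ≠ 0 := hω.ne_zero hn.ne'
  have hc := mem_support_iff.mp (he ⟨0, hcard⟩)
  simp [hω0] at h0
  exact hc h0

/-- Sliding a window of length `w` by one exchanges `b s` for `b (s + w)`. -/
lemma window_succ (b : ℕ → ℕ) (w s : ℕ) :
    ∑ x ∈ Finset.range w, b (s + 1 + x) + b s = ∑ x ∈ Finset.range w, b (s + x) + b (s + w) := by
  rw [← Finset.sum_range_succ (fun x => b (s + x)), Finset.sum_range_succ' (fun x => b (s + x))]
  simp only [add_zero, add_left_inj]
  exact Finset.sum_congr rfl fun x _ => by ring_nf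

lemma window_mul (b : ℕ → ℕ) (w r s : ℕ) :
    ∑ x ∈ Finset.range (r * w), b (s + x)
      = ∑ i ∈ Finset.range r, ∑ x ∈ Finset.range w, b (s + i * w + x) := by
  induction r with
  | zero => simp
  | succ r ih =>
    rw [add_mul, one_mul, Finset.sum_range_add, ih, Finset.sum_range_succ]
    simp only [add_assoc]

/-- If an `rw`-periodic sequence has total mass `r` over a period and every window of
length `w` has positive mass, then every window has mass one. -/
lemma window_eq_one {b : ℕ → ℕ} {w r : ℕ} (hper : ∀ s, b (s + r * w) = b s)
    (htot : ∑ x ∈ Finset.range (r * w), b x = r) (hr : 0 < r)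
    (hpos : ∀ s, 1 ≤ ∑ x ∈ Finset.range w, b (s + x)) (s : ℕ) :
    ∑ x ∈ Finset.range w, b (s + x) = 1 := by
  have hs : ∀ s, ∑ x ∈ Finset.range (r * w), b (s + x) = r := by
    intro s
    induction s with
    | zero => simpa using htot
    | succ s ih =>
      have := window_succ b (r * w) s
      rw [hper] at this
      omega
  have h := hs s
  rw [window_mul] at h
  have h2 := (Finset.sum_eq_sum_iff_of_le (s := Finset.range r) (f := fun _ => 1)
    (g := fun i => ∑ x ∈ Finset.range w, b (s + i * w + x)) (fun i _ => hpos _)).mp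
    (by rw [h]; simp)
  simpa using (h2 0 (by simpa using hr)).symm

/-- If every window of length `w` has mass one, the sequence is supported in one residue class
modulo `w`: comparing a window with its shift by one shows that the sequence is `w`-periodic. -/
lemma exists_residue {b : ℕ → ℕ} {w : ℕ}
    (h1 : ∀ s, ∑ x ∈ Finset.range w, b (s + x) = 1) :
    ∃ s₀ < w, ∀ s, b s ≠ 0 → s % w = s₀ := by
  have hw : 0 < w := by
    rcases Nat.eq_zero_or_pos w with h | h
    · subst h; simpa using h1 0
    · exact h
  have hper : Function.Periodic b w := by
    intro s
    have := window_succ b w s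
    rw [h1, h1] at this
    omega
  have h0 := h1 0
  simp only [zero_add] at h0
  obtain ⟨s₀, hs₀, hb⟩ := Finset.exists_ne_zero_of_sum_ne_zero (by rw [h0]; exact one_ne_zero)
  refine ⟨s₀, Finset.mem_range.mp hs₀, fun s hs => ?_⟩
  by_contra hne
  rw [← hper.map_mod_nat] at hs
  have := Finset.add_le_sum (f := b) (fun i _ => Nat.zero_le _)
    (Finset.mem_range.mpr (Nat.mod_lt s hw)) hs₀ hne
  omega

/-- Below degree `r`, multiplication by `1 + z^r + ⋯ + z^{(w-1)r}` makes `w` disjoint shifted copies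
of the coefficient sequence. -/
lemma coeff_mul_comb {R : ℂ[X]} {r w m i : ℕ} (hR : R.natDegree < r) (hm : m < r) (hi : i < w) :
    (R * ∑ i ∈ Finset.range w, X ^ (i * r)).coeff (m + i * r) = R.coeff m := by
  rw [Finset.mul_sum, finsetSum_coeff, Finset.sum_eq_single i]
  · simp [coeff_mul_X_pow']
  · intro j _ hj
    rw [coeff_mul_X_pow']
    split_ifs with h
    · apply coeff_eq_zero_of_natDegree_lt
      have hji : j < i := by
        by_contra hcon
        have : i + 1 ≤ j := by omega
        have := Nat.mul_le_mul_right r this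
        rw [add_mul] at this
        omega
      have := Nat.mul_le_mul_right r (show j + 1 ≤ i from hji)
      rw [add_mul] at this
      omega
    · rfl
  · intro h
    exact absurd (Finset.mem_range.mpr hi) h

lemma comb_mul (r w : ℕ) :
    (∑ i ∈ Finset.range w, (X : ℂ[X]) ^ (i * r)) * (X ^ r - 1) = X ^ (r * w) - 1 := by
  rw [pow_mul, ← geom_sum_mul (X ^ r : ℂ[X]) w]
  simp only [← pow_mul, mul_comm r]

/-- If every `n`-th root of unity that is not a root of `Q` is an `r`-th root of unity, where
`n = r w`, then `1 + z^r + ⋯ + z^{(w-1)r} = (z^n - 1)/(z^r - 1)` divides `Q`. -/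
lemma comb_dvd {r w : ℕ} (hr : 0 < r) (hw : 0 < w) {Q : ℂ[X]}
    (hQ : ∀ z : ℂ, z ^ (r * w) = 1 → Q.eval z ≠ 0 → z ^ r = 1) :
    ∑ i ∈ Finset.range w, (X : ℂ[X]) ^ (i * r) ∣ Q := by
  have hn : 0 < r * w := Nat.mul_pos hr hw
  have hne : (X ^ r - 1 : ℂ[X]) ≠ 0 := X_pow_sub_C_ne_zero hr 1
  rw [← mul_dvd_mul_iff_right hne, comb_mul,
    X_pow_sub_one_eq_prod hn (Complex.isPrimitiveRoot_exp _ hn.ne')]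
  refine Finset.prod_dvd_of_coprime
    (fun a _ b _ hab => pairwise_coprime_X_sub_C (s := fun z : ℂ => z) Function.injective_id hab) ?_
  intro z hz
  rw [mem_nthRootsFinset hn] at hz
  rw [dvd_iff_isRoot, IsRoot.def, eval_mul]
  by_cases h : Q.eval z = 0
  · simp [h]
  · simp [hQ z hz h]

/-- If `Q` has `w` monomials, degree less than `rw` and is divisible by
`1 + z^r + ⋯ + z^{(w-1)r}`, the quotient is a monomial: each monomial of the quotient contributes
`w` monomials to `Q`. -/
lemma eq_monomial_mul_comb {r w : ℕ} (hr : 0 < r) (hw : 0 < w) {Q : ℂ[X]} (hQ0 : Q ≠ 0)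
    (hdeg : Q.natDegree < r * w) (hcard : Q.support.card = w)
    (hdvd : ∑ i ∈ Finset.range w, (X : ℂ[X]) ^ (i * r) ∣ Q) :
    ∃ (c : ℂ) (l : ℕ), c ≠ 0 ∧ l < r ∧
      Q = C c * (X ^ l * ∑ i ∈ Finset.range w, X ^ (i * r)) := by
  obtain ⟨R, hR⟩ := hdvd
  rw [mul_comm] at hR
  have hR0 : R ≠ 0 := by rintro rfl; simp [hQ0] at hR
  have hRdeg : R.natDegree < r := by
    have h1 : (Q * (X ^ r - 1)) = R * (X ^ (r * w) - 1) := by rw [hR, mul_assoc, comb_mul]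
    have h2 := congrArg natDegree h1
    have hd : ∀ m, 0 < m → (X ^ m - 1 : ℂ[X]) ≠ 0 ∧ (X ^ m - 1 : ℂ[X]).natDegree = m :=
      fun m hm => ⟨X_pow_sub_C_ne_zero hm 1, natDegree_X_pow_sub_C (r := (1 : ℂ))⟩
    have hn : 0 < r * w := Nat.mul_pos hr hw
    rw [natDegree_mul hQ0 (hd r hr).1, natDegree_mul hR0 (hd _ hn).1, (hd r hr).2,
      (hd _ hn).2] at h2
    omega
  obtain ⟨l, hl⟩ := nonempty_support_iff.mpr hR0
  have hlr : l < r := (le_natDegree_of_mem_supp _ hl).trans_lt hRdeg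
  have hsub : (Finset.range w).image (fun i => l + i * r) ⊆ Q.support := by
    intro m hm
    obtain ⟨i, hi, rfl⟩ := Finset.mem_image.mp hm
    rw [mem_support_iff, hR, coeff_mul_comb hRdeg hlr (Finset.mem_range.mp hi)]
    exact mem_support_iff.mp hl
  have hsupp := Finset.eq_of_subset_of_card_le hsub (by
    rw [hcard, Finset.card_image_of_injective _ (fun a b hab => by
      simpa [hr.ne'] using hab), Finset.card_range])
  have huniq : ∀ m, R.coeff m ≠ 0 → m = l := by
    intro m hm
    have hmr : m < r := (le_natDegree_of_ne_zero hm).trans_lt hRdeg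
    have hmQ : m ∈ Q.support := by
      have := coeff_mul_comb hRdeg hmr hw
      rw [zero_mul, add_zero, ← hR] at this
      rwa [mem_support_iff, this]
    rw [← hsupp] at hmQ
    obtain ⟨i, -, hi⟩ := Finset.mem_image.mp hmQ
    have := congrArg (· % r) hi
    simpa [Nat.mod_eq_of_lt hlr, Nat.mod_eq_of_lt hmr] using this.symm
  refine ⟨R.coeff l, l, mem_support_iff.mp hl, hlr, ?_⟩
  rw [← mul_assoc, hR]
  congr 1
  ext m
  rw [coeff_C_mul_X_pow]
  split_ifs with h
  · rw [h]
  · by_contra hm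
    exact h (huniq m hm)

lemma support_Dpoly {n r l : ℕ} :
    (Dpoly n r l).support = (Finset.range (n / r)).image (fun i => l + i * r) := by
  ext m
  simp only [Dpoly, Finset.mul_sum, ← pow_add, mem_support_iff, finsetSum_coeff, coeff_X_pow,
    Finset.sum_boole, Finset.mem_image, Finset.mem_range]
  rw [Nat.cast_ne_zero, Finset.card_ne_zero, Finset.filter_nonempty_iff]
  simp only [Finset.mem_range, eq_comm]

lemma eval_Dpoly_ne_zero_iff {n r l : ℕ} (hn : 0 < n) (hrn : r ∣ n) {z : ℂ} (hz : z ^ n = 1) :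
    (Dpoly n r l).eval z ≠ 0 ↔ z ^ r = 1 := by
  have hz0 : z ≠ 0 := by rintro rfl; simp [hn.ne'] at hz
  have hq : n / r ≠ 0 := (Nat.div_pos (Nat.le_of_dvd hn hrn) (Nat.pos_of_dvd_of_pos hrn hn)).ne'
  have hg := congrArg (eval z) (comb_mul r (n / r))
  rw [Nat.mul_div_cancel' hrn] at hg
  simp only [eval_mul, eval_sub, eval_pow, eval_X, eval_one, hz, sub_self, mul_eq_zero] at hg
  rw [Dpoly, eval_mul, eval_pow, eval_X]
  constructor
  · intro h
    rcases hg with h1 | h1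
    · simp [h1] at h
    · exact sub_eq_zero.mp h1
  · intro h
    simp only [eval_finsetSum, eval_pow, eval_X, mul_comm _ r, pow_mul, h]
    have : (Nat.cast (n / r) : ℂ) ≠ 0 := Nat.cast_ne_zero.mpr hq
    simpa [hz0] using this

lemma support_comp_C_mul_X {P : ℂ[X]} {a : ℂ} (ha : a ≠ 0) :
    (P.comp (C a * X)).support = P.support := by
  ext m
  simp [comp_C_mul_X_coeff, ha]

lemma toFinset_nthRoots {n : ℕ} (hn : 0 < n) {ω : ℂ} (hω : IsPrimitiveRoot ω n) :
    (nthRoots n (1 : ℂ)).toFinset = (Finset.range n).image (fun s => ω ^ s) := by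
  ext z
  have : NeZero n := ⟨hn.ne'⟩
  simp only [Multiset.mem_toFinset, mem_nthRoots hn, Finset.mem_image, Finset.mem_range]
  constructor
  · exact hω.eq_pow_of_pow_eq_one
  · rintro ⟨s, -, rfl⟩
    rw [← pow_mul, mul_comm, pow_mul, hω.pow_eq_one, one_pow]

/-- Let `n ≥ 1`, `ω = e^{2πi/n}`, and let `P` be a non-zero complex polynomial of
degree at most `n - 1` having exactly `k` distinct roots among the `n`-th roots of
unity. Then `w(P) * (n - k) = n` if and only if `P(z) = c · D_{n,r,l}(ω^j z)` for some
`c ≠ 0`, a divisor `r` of `n`, some `0 ≤ l ≤ r - 1` and some `0 ≤ j ≤ n - 1`. -/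
theorem equality_iff (n : ℕ) (hn : 1 ≤ n)
    (ω : ℂ) (hω : ω = Complex.exp (2 * Real.pi * Complex.I / n))
    (P : Polynomial ℂ) (hP : P ≠ 0) (hdeg : P.natDegree ≤ n - 1)
    (k : ℕ)
    (hk : k = (((Polynomial.nthRoots n (1 : ℂ)).toFinset).filter
      (fun z => P.eval z = 0)).card) :
    P.support.card * (n - k) = n ↔
      ∃ (c : ℂ) (r l j : ℕ), c ≠ 0 ∧ r ∣ n ∧ l < r ∧ j < n ∧
        P = Polynomial.C c *
          ((Dpoly n r l).comp (Polynomial.C (ω ^ j) * Polynomial.X)) := by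
  have hprim : IsPrimitiveRoot ω n := hω ▸ Complex.isPrimitiveRoot_exp n (by omega)
  have hω0 : ω ≠ 0 := hprim.ne_zero (by omega)
  have hω1 : ω ^ n = 1 := hprim.pow_eq_one
  have hdeg' : P.natDegree < n := by omega
  have hinj : Set.InjOn (fun s => ω ^ s) (Finset.range n : Set ℕ) := fun a ha b hb hab =>
    hprim.pow_inj (by simpa using ha) (by simpa using hb) hab
  have hroots := toFinset_nthRoots (by omega) hprim
  have hcount : (((nthRoots n (1 : ℂ)).toFinset).filter (fun z => P.eval z ≠ 0)).card = n - k := by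
    have h1 := Finset.card_filter_add_card_filter_not (s := (nthRoots n (1 : ℂ)).toFinset)
      (fun z => P.eval z = 0)
    have h2 : (nthRoots n (1 : ℂ)).toFinset.card = n := by
      rw [hroots, Finset.card_image_of_injOn hinj, Finset.card_range]
    rw [h2, ← hk] at h1
    simp only [ne_eq]
    omega
  constructor
  · intro h
    obtain ⟨w, hw⟩ : ∃ w, w = P.support.card := ⟨_, rfl⟩
    obtain ⟨r, hr⟩ : ∃ r, r = n - k := ⟨_, rfl⟩
    rw [← hw, ← hr] at h
    have hnrw : r * w = n := by rw [mul_comm, h]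
    have hw0 : 0 < w := by
      rcases Nat.eq_zero_or_pos w with h0 | h0
      · simp [h0] at h; omega
      · exact h0
    have hr0 : 0 < r := by
      rcases Nat.eq_zero_or_pos r with h0 | h0
      · simp [h0] at h; omega
      · exact h0
    -- The indicator of the nonroots `ω ^ s`.
    let b : ℕ → ℕ := fun s => if P.eval (ω ^ s) ≠ 0 then 1 else 0
    have hper : ∀ s, b (s + r * w) = b s := by
      intro s
      simp only [b, hnrw, pow_add, hω1, mul_one]
    have htot : ∑ x ∈ Finset.range (r * w), b x = r := by
      rw [hnrw, hr, ← hcount, hroots, Finset.card_filter, Finset.sum_image hinj]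
    have hpos : ∀ s, 1 ≤ ∑ x ∈ Finset.range w, b (s + x) := by
      intro s
      obtain ⟨x, hx, hne⟩ := exists_eval_ne_zero hprim hP hdeg' s
      rw [← hw] at hx
      have := Finset.single_le_sum (f := fun x => b (s + x)) (fun i _ => Nat.zero_le _)
        (Finset.mem_range.mpr hx)
      simpa [b, hne] using this
    obtain ⟨s₀, hs₀, hres⟩ := exists_residue (window_eq_one hper htot hr0 hpos)
    have hwn : w ≤ n := by rw [← h]; exact Nat.le_mul_of_pos_right _ hr0
    have hs₀0 : ω ^ s₀ ≠ 0 := pow_ne_zero _ hω0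
    -- Rotating by `ω ^ s₀` moves the nonroots to the `r`-th roots of unity.
    obtain ⟨Q, hQ⟩ : ∃ Q, Q = P.comp (C (ω ^ s₀) * X) := ⟨_, rfl⟩
    have hQs : Q.support = P.support := by rw [hQ, support_comp_C_mul_X hs₀0]
    have hQ0 : Q ≠ 0 := by
      rw [← support_nonempty, hQs, support_nonempty]; exact hP
    have hQdeg : Q.natDegree < r * w := by
      have hmem := natDegree_mem_support_of_nonzero hQ0
      rw [hQs] at hmem
      rw [hnrw]
      exact (le_natDegree_of_mem_supp _ hmem).trans_lt hdeg'
    have hdvd := comb_dvd hr0 hw0 (Q := Q) (by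
      intro z hz hne
      have : NeZero n := ⟨by omega⟩
      rw [hnrw] at hz
      obtain ⟨s, -, rfl⟩ := hprim.eq_pow_of_pow_eq_one hz
      have hb : b (s₀ + s) ≠ 0 := by
        rw [hQ, eval_comp] at hne
        simp only [eval_mul, eval_C, eval_X, ← pow_add] at hne
        simp [b, hne]
      have hmod : (s₀ + s) ≡ s₀ + 0 [MOD w] := by
        rw [Nat.ModEq, hres _ hb, add_zero, Nat.mod_eq_of_lt hs₀]
      obtain ⟨t, rfl⟩ := (Nat.modEq_zero_iff_dvd.mp (Nat.ModEq.add_left_cancel' s₀ hmod))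
      rw [← pow_mul, show w * t * r = n * t by rw [← hnrw]; ring, pow_mul, hω1, one_pow])
    obtain ⟨c, l, hc, hl, hQe⟩ :=
      eq_monomial_mul_comb hr0 hw0 hQ0 hQdeg (by rw [hQs, hw]) hdvd
    refine ⟨c, r, l, (n - s₀) % n, hc, ⟨w, hnrw.symm⟩, hl, Nat.mod_lt _ (by omega), ?_⟩
    have hnr : n / r = w := by rw [← hnrw, Nat.mul_div_cancel_left _ hr0]
    have hQD : Q = C c * Dpoly n r l := by rw [hQe, Dpoly, hnr]
    have hj : ω ^ ((n - s₀) % n) = ω ^ (n - s₀) := by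
      conv_rhs => rw [← Nat.mod_add_div (n - s₀) n, pow_add, pow_mul, hω1, one_pow, mul_one]
    have hinv : ω ^ s₀ * ω ^ (n - s₀) = 1 := by
      rw [← pow_add, Nat.add_sub_cancel' (by omega), hω1]
    rw [hj]
    ext m
    have := congrArg (fun p => p.coeff m) hQD
    simp only [hQ, comp_C_mul_X_coeff, coeff_C_mul] at this
    rw [coeff_C_mul, comp_C_mul_X_coeff, ← mul_assoc, ← this, mul_assoc, ← mul_pow, hinv,
      one_pow, mul_one]
  · rintro ⟨c, r, l, j, hc, hrn, hl, -, hPe⟩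
    have hr0 : 0 < r := by omega
    have hj0 : ω ^ j ≠ 0 := pow_ne_zero _ hω0
    have hcard : P.support.card = n / r := by
      have : P.support = (Dpoly n r l).support := by
        rw [← support_comp_C_mul_X (P := Dpoly n r l) hj0, hPe]
        ext m
        simp [hc]
      rw [this, support_Dpoly, Finset.card_image_of_injective _ (fun a b hab => by
        simpa [hr0.ne'] using hab), Finset.card_range]
    have hnr : n - k = r := by
      have hpr : IsPrimitiveRoot (ω ^ (n / r)) r :=
        hprim.pow (by omega) (Nat.div_mul_cancel hrn).symm
      rw [← hcount, ← hpr.card_nthRootsFinset]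
      have hjn : (ω ^ j) ^ n = 1 := by rw [← pow_mul, mul_comm, pow_mul, hω1, one_pow]
      have hiff : ∀ z : ℂ, z ^ n = 1 → (P.eval z ≠ 0 ↔ (ω ^ j * z) ^ r = 1) := by
        intro z hz
        rw [← eval_Dpoly_ne_zero_iff (l := l) hn hrn (z := ω ^ j * z)
          (by rw [mul_pow, hjn, hz, one_mul]), hPe]
        simp [eval_comp, hc]
      refine Finset.card_bij (fun z _ => ω ^ j * z) ?_ ?_ ?_
      · intro z hz
        simp only [Finset.mem_filter, Multiset.mem_toFinset, mem_nthRoots hn] at hz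
        rw [mem_nthRootsFinset hr0]
        exact (hiff z hz.1).mp hz.2
      · intro a _ b _ hab
        exact mul_left_cancel₀ hj0 hab
      · intro z hz
        rw [mem_nthRootsFinset hr0] at hz
        have hzn : z ^ n = 1 := by
          rw [← Nat.mul_div_cancel' hrn, pow_mul, hz, one_pow]
        have hz' : ((ω ^ j)⁻¹ * z) ^ n = 1 := by rw [mul_pow, inv_pow, hjn, hzn]; simp
        refine ⟨(ω ^ j)⁻¹ * z, ?_, mul_inv_cancel_left₀ hj0 z⟩
        simp only [Finset.mem_filter, Multiset.mem_toFinset, mem_nthRoots hn]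
        exact ⟨hz', (hiff _ hz').mpr (by rw [mul_inv_cancel_left₀ hj0, hz])⟩
    rw [hcard, hnr, Nat.div_mul_cancel hrn]
end
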